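/- Let ν be a probability measure on {-1,1}^n satisfying ∇²L[ν](x) ⪯ β·diag(∇²L[ν](x)) for all x ∈ ℝ^n and some β ≥ 1. Then the sum of marginal entropies is at most β times the total entropy: Σ_{i∈[n]} H(πᵢ(ν)) ≤ β·H(ν). -/

import Mathlib

open Finset

/-- The embedding of a Boolean point into `{-1,1}^n ⊆ ℝ^n`. -/
noncomputable def vec {n : ℕ} (σ : Fin n → Bool) : Fin n → ℝ := fun i => if σ i then 1 else -1

/-- The log-Laplace transform of a (weighted) measure `ν` on the discrete cube. -/
noncomputable def LL {n : ℕ} (ν : (Fin n → Bool) → ℝ) (x : Fin n → ℝ) : ℝ :=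
  Real.log (∑ σ : Fin n → Bool, ν σ * Real.exp (∑ i, x i * vec σ i))

/-- The exponential tilt `τ_w ν` of `ν`, as a weight function on the cube. -/
noncomputable def tilt {n : ℕ} (ν : (Fin n → Bool) → ℝ) (w : Fin n → ℝ) (σ : Fin n → Bool) : ℝ :=
  ν σ * Real.exp (∑ i, w i * vec σ i) /
    ∑ τ : Fin n → Bool, ν τ * Real.exp (∑ i, w i * vec τ i)

/-- Barycenter (mean) of the tilted measure, `a_ν(w)`. -/
noncomputable def tmean {n : ℕ} (ν : (Fin n → Bool) → ℝ) (w : Fin n → ℝ) (i : Fin n) : ℝ :=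
  ∑ σ : Fin n → Bool, tilt ν w σ * vec σ i

/-- Covariance matrix of the tilted measure, `A_ν(w) = Cov(τ_w ν)`. -/
noncomputable def tcov {n : ℕ} (ν : (Fin n → Bool) → ℝ) (w : Fin n → ℝ) (i j : Fin n) : ℝ :=
  ∑ σ : Fin n → Bool, tilt ν w σ * (vec σ i - tmean ν w i) * (vec σ j - tmean ν w j)

/-- Partial derivative in the `i`-th coordinate direction. -/
noncomputable def pderiv' {n : ℕ} (f : (Fin n → ℝ) → ℝ) (i : Fin n) (x : Fin n → ℝ) : ℝ :=
  fderiv ℝ f x (Pi.single i 1)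

/-- Hessian matrix entry `∂ᵢ∂ⱼ f (x)`. -/
noncomputable def hess {n : ℕ} (f : (Fin n → ℝ) → ℝ) (x : Fin n → ℝ) (i j : Fin n) : ℝ :=
  pderiv' (pderiv' f j) i x

/-- Weighted exponential sum. -/
noncomputable def SS {n : ℕ} (c : (Fin n → Bool) → ℝ) (x : Fin n → ℝ) : ℝ :=
  ∑ σ : Fin n → Bool, c σ * Real.exp (∑ i, x i * vec σ i)

lemma SS_diff {n : ℕ} (c : (Fin n → Bool) → ℝ) : Differentiable ℝ (SS c) := by
  unfold SS; fun_prop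

lemma SS_hasDeriv {n : ℕ} (c : (Fin n → Bool) → ℝ) (x : Fin n → ℝ) (i : Fin n) :
    fderiv ℝ (SS c) x (Pi.single i 1) = SS (fun σ => c σ * vec σ i) x := by
  rw [← (SS_diff c x).lineDeriv_eq_fderiv]
  have : HasDerivAt (fun t : ℝ => SS c (x + t • Pi.single i 1))
      (SS (fun σ => c σ * vec σ i) x) 0 := by
    unfold SS
    apply HasDerivAt.fun_sum
    intro σ _
    have h1 : HasDerivAt (fun t : ℝ => ∑ k, (x + t • (Pi.single i 1 : Fin n → ℝ)) k * vec σ k)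
        (vec σ i) 0 := by
      have : ∀ t : ℝ, ∑ k, (x + t • (Pi.single i 1 : Fin n → ℝ)) k * vec σ k
          = (∑ k, x k * vec σ k) + t * vec σ i := by
        intro t
        simp [add_mul, Finset.sum_add_distrib, Pi.single_apply]
      simp_rw [this]
      simpa using ((hasDerivAt_id (0:ℝ)).mul_const (vec σ i)).const_add (∑ k, x k * vec σ k)
    have h2 := (h1.exp).const_mul (c σ)
    refine h2.congr_deriv ?_
    simp
    ring
  exact this.deriv

lemma SS_pos {n : ℕ} (ν : (Fin n → Bool) → ℝ)
    (hν0 : ∀ σ, 0 ≤ ν σ) (hν1 : ∑ σ : Fin n → Bool, ν σ = 1) (x : Fin n → ℝ) : 0 < SS ν x := by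
  have hnn : ∀ σ ∈ (univ : Finset (Fin n → Bool)), 0 ≤ ν σ * Real.exp (∑ i, x i * vec σ i) :=
    fun σ _ => mul_nonneg (hν0 σ) (Real.exp_pos _).le
  refine lt_of_le_of_ne (Finset.sum_nonneg hnn) ?_
  intro h
  have h' := (Finset.sum_eq_zero_iff_of_nonneg hnn).1 h.symm
  have : ∑ σ : Fin n → Bool, ν σ = 0 := Finset.sum_eq_zero (fun σ hσ => by
    have := h' σ hσ
    rcases mul_eq_zero.1 this with h | h
    · exact h
    · exact absurd h (Real.exp_pos _).ne')
  rw [this] at hν1; exact zero_ne_one hν1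

lemma hess_eq {n : ℕ} (ν : (Fin n → Bool) → ℝ)
    (hν0 : ∀ σ, 0 ≤ ν σ) (hν1 : ∑ σ : Fin n → Bool, ν σ = 1) (x : Fin n → ℝ) (i j : Fin n) :
    hess (LL ν) x i j = (SS (fun σ => ν σ * vec σ j * vec σ i) x * SS ν x
      - SS (fun σ => ν σ * vec σ i) x * SS (fun σ => ν σ * vec σ j) x) / (SS ν x)^2 := by
  have hpos := SS_pos ν hν0 hν1
  have h1 : pderiv' (LL ν) j = fun x => SS (fun σ => ν σ * vec σ j) x / SS ν x := by
    funext y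
    have : LL ν = fun z => Real.log (SS ν z) := rfl
    unfold pderiv'
    rw [this, fderiv.log (SS_diff ν y) (hpos y).ne']
    simp [SS_hasDeriv, div_eq_inv_mul]
  unfold hess
  rw [h1]
  unfold pderiv'
  have hd : DifferentiableAt ℝ (fun x => SS (fun σ => ν σ * vec σ j) x / SS ν x) x := by
    simp_rw [div_eq_mul_inv]
    exact (SS_diff _ x).mul ((SS_diff ν x).inv (hpos x).ne')
  rw [← hd.lineDeriv_eq_fderiv]
  have ha := (SS_diff (fun σ => ν σ * vec σ j) x).hasFDerivAt.hasLineDerivAt (Pi.single i 1)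
  have hb := (SS_diff ν x).hasFDerivAt.hasLineDerivAt (Pi.single i 1)
  rw [SS_hasDeriv] at ha hb
  unfold HasLineDerivAt at ha hb
  have hc := ha.fun_div hb (by simpa using (hpos x).ne')
  unfold lineDeriv
  rw [hc.deriv]
  simp
  ring

lemma sum_sq_exp {n : ℕ} (w : (Fin n → Bool) → ℝ) (u : Fin n → ℝ) :
    ∑ i, ∑ j, u i * u j * ∑ σ, w σ * vec σ j * vec σ i = ∑ σ, w σ * (∑ i, u i * vec σ i) ^ 2 := by
  simp_rw [sq, Finset.sum_mul_sum, Finset.mul_sum]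
  rw [Finset.sum_comm' (t' := univ) (s' := fun _ => univ) (by simp)]
  conv_rhs => rw [Finset.sum_comm]
  rw [Finset.sum_comm]
  refine Finset.sum_congr rfl fun i _ => ?_
  rw [Finset.sum_comm]
  refine Finset.sum_congr rfl fun j _ => Finset.sum_congr rfl fun k _ => ?_
  ring

lemma vec_sq {n : ℕ} (σ : Fin n → Bool) (i : Fin n) : vec σ i * vec σ i = 1 := by
  unfold vec; split_ifs <;> norm_num

/-- Covariance inequality at a point of tilt. -/
lemma covA {n : ℕ} (ν : (Fin n → Bool) → ℝ)
    (hν0 : ∀ σ, 0 ≤ ν σ) (hν1 : ∑ σ : Fin n → Bool, ν σ = 1)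
    (β : ℝ)
    (hcond : ∀ x : Fin n → ℝ, ∀ u : Fin n → ℝ,
      (∑ i, ∑ j, u i * hess (LL ν) x i j * u j) ≤ β * ∑ i, hess (LL ν) x i i * (u i) ^ 2)
    (x u : Fin n → ℝ) (w : (Fin n → Bool) → ℝ)
    (hw : ∀ σ, w σ = ν σ * Real.exp (∑ i, x i * vec σ i)) :
    (∑ σ, w σ) * ∑ σ, w σ * (∑ i, u i * vec σ i) ^ 2 - (∑ σ, w σ * ∑ i, u i * vec σ i) ^ 2
      ≤ β * ∑ i, u i ^ 2 * ((∑ σ, w σ) ^ 2 - (∑ σ, w σ * vec σ i) ^ 2) := by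
  have h := hcond x u
  simp_rw [hess_eq ν hν0 hν1] at h
  have hpos := SS_pos ν hν0 hν1 x
  have e0 : SS ν x = ∑ σ, w σ := Finset.sum_congr rfl fun σ _ => (hw σ).symm
  have e1 : ∀ i, SS (fun σ => ν σ * vec σ i) x = ∑ σ, w σ * vec σ i := fun i =>
    Finset.sum_congr rfl fun σ _ => by rw [hw σ]; ring
  have e2 : ∀ i j, SS (fun σ => ν σ * vec σ j * vec σ i) x = ∑ σ, w σ * vec σ j * vec σ i :=
    fun i j => Finset.sum_congr rfl fun σ _ => by rw [hw σ]; ring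
  simp_rw [e0, e1, e2] at h
  rw [e0] at hpos
  have e3 : ∀ i, ∑ σ, w σ * vec σ i * vec σ i = ∑ σ, w σ := fun i =>
    Finset.sum_congr rfl fun σ _ => by rw [mul_assoc, vec_sq, mul_one]
  simp_rw [e3] at h
  rw [← sum_sq_exp]
  have e4 : ∑ σ, w σ * ∑ i, u i * vec σ i = ∑ i, u i * ∑ σ, w σ * vec σ i := by
    simp_rw [Finset.mul_sum]
    rw [Finset.sum_comm]
    refine Finset.sum_congr rfl fun j _ => Finset.sum_congr rfl fun k _ => ?_
    ring
  rw [e4]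
  set Z := ∑ σ, w σ
  have h' := mul_le_mul_of_nonneg_left h (sq_nonneg Z)
  clear_value Z
  refine le_of_eq_of_le ?_ (h'.trans_eq ?_)
  · rw [sq (∑ i, u i * ∑ σ, w σ * vec σ i), Finset.sum_mul_sum, Finset.mul_sum, Finset.mul_sum,
      ← Finset.sum_sub_distrib]
    refine Finset.sum_congr rfl fun i _ => ?_
    simp only [Finset.mul_sum univ (fun j : Fin n => _)]
    rw [← Finset.sum_sub_distrib]
    refine Finset.sum_congr rfl fun j _ => ?_
    generalize (∑ σ, w σ * vec σ j * vec σ i) = A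
    generalize (∑ σ, w σ * vec σ j) = B
    generalize (∑ σ, w σ * vec σ i) = C
    field_simp
    try ring
  · rw [← mul_assoc, mul_comm (Z^2) β, mul_assoc, Finset.mul_sum]
    refine congrArg (β * ·) ?_
    refine Finset.sum_congr rfl fun j _ => ?_
    field_simp
    try ring

lemma covB {n : ℕ} (ν : (Fin n → Bool) → ℝ)
    (hν0 : ∀ σ, 0 ≤ ν σ) (hν1 : ∑ σ : Fin n → Bool, ν σ = 1)
    (β : ℝ) (hβ : 0 ≤ β)
    (hcond : ∀ x : Fin n → ℝ, ∀ u : Fin n → ℝ,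
      (∑ i, ∑ j, u i * hess (LL ν) x i j * u j) ≤ β * ∑ i, hess (LL ν) x i i * (u i) ^ 2)
    (a r : Fin n → Bool → ℝ) (w : (Fin n → Bool) → ℝ)
    (hw : ∀ σ, w σ = ν σ * Real.exp (∑ i, a i (σ i))) :
    (∑ σ, w σ) * ∑ σ, w σ * (∑ i, r i (σ i)) ^ 2 - (∑ σ, w σ * ∑ i, r i (σ i)) ^ 2
      ≤ β * ((∑ σ, w σ) * ∑ σ, w σ * ∑ i, r i (σ i) ^ 2) := by
  set x : Fin n → ℝ := fun i => (a i true - a i false) / 2 with hx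
  set m : ℝ := ∑ i, (a i true + a i false) / 2 with hm
  set u : Fin n → ℝ := fun i => (r i true - r i false) / 2 with hu
  set v : Fin n → ℝ := fun i => (r i true + r i false) / 2 with hv
  set w' : (Fin n → Bool) → ℝ := fun σ => ν σ * Real.exp (∑ i, x i * vec σ i) with hw'
  have hA := covA ν hν0 hν1 β hcond x u w' (fun σ => rfl)
  have ha : ∀ σ : Fin n → Bool, ∑ i, a i (σ i) = m + ∑ i, x i * vec σ i := by
    intro σ
    rw [hm, ← Finset.sum_add_distrib]
    refine Finset.sum_congr rfl fun i _ => ?_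
    simp only [hx, vec]
    cases σ i <;> simp <;> ring
  have hr : ∀ (σ : Fin n → Bool) i, r i (σ i) = v i + u i * vec σ i := by
    intro σ i
    simp only [hu, hv, vec]
    cases σ i <;> simp <;> ring
  have hww : ∀ σ, w σ = Real.exp m * w' σ := by
    intro σ
    rw [hw, ha, Real.exp_add, hw']; ring
  have hwn : ∀ σ, 0 ≤ w' σ := fun σ => mul_nonneg (hν0 σ) (Real.exp_pos _).le
  have hZ : 0 ≤ ∑ σ, w' σ := Finset.sum_nonneg fun σ _ => hwn σ
  have key : (∑ σ, w' σ) * ∑ σ, w' σ * (∑ i, r i (σ i)) ^ 2 - (∑ σ, w' σ * ∑ i, r i (σ i)) ^ 2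
      ≤ β * ((∑ σ, w' σ) * ∑ σ, w' σ * ∑ i, r i (σ i) ^ 2) := by
    have l1 : (∑ σ, w' σ) * ∑ σ, w' σ * (∑ i, r i (σ i)) ^ 2 - (∑ σ, w' σ * ∑ i, r i (σ i)) ^ 2
      = (∑ σ, w' σ) * ∑ σ, w' σ * (∑ i, u i * vec σ i) ^ 2
        - (∑ σ, w' σ * ∑ i, u i * vec σ i) ^ 2 := by
      have s1 : ∀ σ : Fin n → Bool, ∑ i, r i (σ i) = (∑ i, v i) + ∑ i, u i * vec σ i := by
        intro σ; rw [← Finset.sum_add_distrib]; exact Finset.sum_congr rfl fun i _ => hr σ i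
      simp_rw [s1]
      set V := ∑ i, v i
      have s2 : ∑ σ, w' σ * (V + ∑ i, u i * vec σ i) = V * (∑ σ, w' σ)
          + ∑ σ, w' σ * ∑ i, u i * vec σ i := by
        rw [Finset.mul_sum, ← Finset.sum_add_distrib]
        exact Finset.sum_congr rfl fun i _ => by ring
      have s3 : ∑ σ, w' σ * (V + ∑ i, u i * vec σ i) ^ 2 = V ^ 2 * (∑ σ, w' σ)
          + 2 * V * (∑ σ, w' σ * ∑ i, u i * vec σ i) + ∑ σ, w' σ * (∑ i, u i * vec σ i) ^ 2 := by
        rw [Finset.mul_sum, Finset.mul_sum, ← Finset.sum_add_distrib, ← Finset.sum_add_distrib]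
        exact Finset.sum_congr rfl fun i _ => by ring
      rw [s2, s3]; ring
    rw [l1]
    refine hA.trans (mul_le_mul_of_nonneg_left ?_ hβ)
    have s4 : (∑ σ, w' σ) * ∑ σ, w' σ * ∑ i, r i (σ i) ^ 2
        = ∑ i, (∑ σ, w' σ) * ∑ σ, w' σ * r i (σ i) ^ 2 := by
      rw [← Finset.mul_sum]
      simp_rw [Finset.mul_sum (s := (univ : Finset (Fin n)))]
      rw [Finset.sum_comm]
      simp_rw [Finset.mul_sum]
    rw [s4]
    refine Finset.sum_le_sum fun i _ => ?_
    have s5 : ∑ σ, w' σ * r i (σ i) ^ 2 = (v i ^ 2 + u i ^ 2) * (∑ σ, w' σ)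
        + 2 * v i * u i * (∑ σ, w' σ * vec σ i) := by
      rw [Finset.mul_sum, Finset.mul_sum, ← Finset.sum_add_distrib]
      refine Finset.sum_congr rfl fun σ _ => ?_
      rw [hr]
      have := vec_sq σ i
      linear_combination w' σ * u i ^ 2 * this
    rw [s5]
    nlinarith [sq_nonneg (v i * (∑ σ, w' σ) + u i * ∑ σ, w' σ * vec σ i)]
  have hE := mul_le_mul_of_nonneg_left key (sq_nonneg (Real.exp m))
  simp_rw [hww, mul_assoc, ← Finset.mul_sum]
  linarith [hE]

lemma expC {n : ℕ} (ν : (Fin n → Bool) → ℝ)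
    (hν0 : ∀ σ, 0 ≤ ν σ) (hν1 : ∑ σ : Fin n → Bool, ν σ = 1)
    (β : ℝ) (hβ : 1 ≤ β)
    (hcond : ∀ x : Fin n → ℝ, ∀ u : Fin n → ℝ,
      (∑ i, ∑ j, u i * hess (LL ν) x i j * u j) ≤ β * ∑ i, hess (LL ν) x i i * (u i) ^ 2)
    (d : Fin n → Bool → ℝ) (hd : ∀ i b, -1 ≤ d i b)
    (hd0 : ∑ σ, ν σ * ∑ i, d i (σ i) = 0) (t : ℝ) (ht0 : 0 ≤ t) (ht1 : t < 1) :
    ∑ σ, ν σ * Real.exp (∑ i, β⁻¹ * Real.log (1 + t * d i (σ i))) ≤ 1 := by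
  have hβ0 : 0 < β := by linarith
  set α := β⁻¹ with hα
  have hαβ : α * β = 1 := inv_mul_cancel₀ hβ0.ne'
  have hα0 : 0 < α := inv_pos.2 hβ0
  set w : ℝ → (Fin n → Bool) → ℝ := fun t σ =>
    ν σ * Real.exp (∑ i, α * Real.log (1 + t * d i (σ i))) with hw
  set r : ℝ → Fin n → Bool → ℝ := fun t i b => d i b / (1 + t * d i b) with hr
  set F : ℝ → ℝ := fun t => ∑ σ, w t σ with hF
  set G : ℝ → ℝ := fun t => ∑ σ, w t σ * (α * ∑ i, r t i (σ i)) with hG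
  set K : ℝ → ℝ := fun t => ∑ σ, w t σ *
    ((α * ∑ i, r t i (σ i)) ^ 2 - α * ∑ i, r t i (σ i) ^ 2) with hK
  have hc : ∀ t ∈ Set.Ico (0:ℝ) 1, ∀ i b, 0 < 1 + t * d i b := by
    intro t ht i b
    nlinarith [ht.1, ht.2, hd i b]
  have hw1 : ∀ t ∈ Set.Ico (0:ℝ) 1, ∀ σ,
      HasDerivAt (fun t => w t σ) (w t σ * (α * ∑ i, r t i (σ i))) t := by
    intro t ht σ
    have h1 : HasDerivAt (fun t => ∑ i, α * Real.log (1 + t * d i (σ i)))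
        (∑ i, α * r t i (σ i)) t := by
      apply HasDerivAt.fun_sum
      intro i _
      have := ((((hasDerivAt_id t).mul_const (d i (σ i))).const_add 1).log
        (hc t ht i (σ i)).ne').const_mul α
      simpa [hr] using this
    have h2 := (h1.exp).const_mul (ν σ)
    refine h2.congr_deriv ?_
    simp only [hw]
    rw [← Finset.mul_sum univ (fun i => r t i (σ i)) α]
    generalize Real.exp _ = E
    ring
  have hr1 : ∀ t ∈ Set.Ico (0:ℝ) 1, ∀ σ : Fin n → Bool,
      HasDerivAt (fun t => α * ∑ i, r t i (σ i)) (- (α * ∑ i, r t i (σ i) ^ 2)) t := by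
    intro t ht σ
    have h1 : HasDerivAt (fun t => ∑ i, r t i (σ i)) (∑ i, -(r t i (σ i) ^ 2)) t := by
      apply HasDerivAt.fun_sum
      intro i _
      have h := (((hasDerivAt_id t).mul_const (d i (σ i))).const_add 1)
      have := (hasDerivAt_const t (d i (σ i))).div h (hc t ht i (σ i)).ne'
      refine this.congr_deriv ?_
      simp only [hr, id, div_pow]
      rw [← neg_div]
      congr 1
      ring
    refine (h1.const_mul α).congr_deriv ?_
    rw [Finset.sum_neg_distrib]; ring
  have hF1 : ∀ t ∈ Set.Ico (0:ℝ) 1, HasDerivAt F (G t) t := by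
    intro t ht
    exact HasDerivAt.fun_sum fun σ _ => hw1 t ht σ
  have hG1 : ∀ t ∈ Set.Ico (0:ℝ) 1, HasDerivAt G (K t) t := by
    intro t ht
    refine HasDerivAt.fun_sum fun σ _ => ?_
    refine ((hw1 t ht σ).fun_mul (hr1 t ht σ)).congr_deriv ?_
    ring
  have hFpos : ∀ t, 0 < F t := by
    intro t
    have hnn : ∀ σ ∈ (univ : Finset (Fin n → Bool)), 0 ≤ w t σ :=
      fun σ _ => mul_nonneg (hν0 σ) (Real.exp_pos _).le
    obtain ⟨σ, hσ⟩ : ∃ σ, 0 < ν σ := by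
      by_contra hcon
      push Not at hcon
      have : ∑ σ : Fin n → Bool, ν σ ≤ 0 := Finset.sum_nonpos fun σ _ => hcon σ
      linarith
    exact Finset.sum_pos' hnn ⟨σ, mem_univ _, mul_pos hσ (Real.exp_pos _)⟩
  have hKey : ∀ t, K t * F t - G t * G t ≤ 0 := by
    intro t
    have hB := covB ν hν0 hν1 β hβ0.le hcond (fun i b => α * Real.log (1 + t * d i b)) (r t) (w t)
      (fun σ => rfl)
    have e1 : G t = α * ∑ σ, w t σ * ∑ i, r t i (σ i) := by
      rw [hG, Finset.mul_sum]; exact Finset.sum_congr rfl fun σ _ => by ring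
    have e2 : K t = α ^ 2 * (∑ σ, w t σ * (∑ i, r t i (σ i)) ^ 2)
        - α * ∑ σ, w t σ * ∑ i, r t i (σ i) ^ 2 := by
      rw [hK, Finset.mul_sum, Finset.mul_sum, ← Finset.sum_sub_distrib]
      exact Finset.sum_congr rfl fun σ _ => by ring
    have hB' := mul_le_mul_of_nonneg_left hB (sq_nonneg α)
    have e3 : F t = ∑ σ, w t σ := rfl
    rw [e1, e2, e3]
    have e4 : α ^ 2 * (β * ((∑ σ, w t σ) * ∑ σ, w t σ * ∑ i, r t i (σ i) ^ 2))
      = α * ((∑ σ, w t σ) * ∑ σ, w t σ * ∑ i, r t i (σ i) ^ 2) := by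
      linear_combination α * ((∑ σ, w t σ) * ∑ σ, w t σ * ∑ i, r t i (σ i) ^ 2) * hαβ
    rw [e4] at hB'
    linarith [hB']
  have hint : interior (Set.Ico (0:ℝ) 1) ⊆ Set.Ico (0:ℝ) 1 := interior_subset
  have hq : ∀ t ∈ Set.Ico (0:ℝ) 1, HasDerivAt (fun t => G t / F t)
      ((K t * F t - G t * G t) / F t ^ 2) t := fun t ht =>
    (hG1 t ht).div (hF1 t ht) (hFpos t).ne'
  have hanti : AntitoneOn (fun t => G t / F t) (Set.Ico (0:ℝ) 1) := by
    apply antitoneOn_of_deriv_nonpos (convex_Ico 0 1)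
    · exact fun t ht => (hq t ht).continuousAt.continuousWithinAt
    · exact fun t ht => (hq t (hint ht)).differentiableAt.differentiableWithinAt
    · intro t ht
      rw [(hq t (hint ht)).deriv]
      exact div_nonpos_of_nonpos_of_nonneg (hKey t) (sq_nonneg _)
  have hG0 : G 0 = 0 := by
    have : G 0 = α * ∑ σ, ν σ * ∑ i, d i (σ i) := by
      rw [Finset.mul_sum]
      simp only [hG, hw, hr]
      refine Finset.sum_congr rfl fun σ _ => ?_
      simp
      ring
    rw [this, hd0, mul_zero]
  have hF0 : F 0 = 1 := by
    simp only [hF, hw]; simp [hν1]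
  have h0 : (0:ℝ) ∈ Set.Ico (0:ℝ) 1 := ⟨le_rfl, one_pos⟩
  have hGneg : ∀ t ∈ Set.Ico (0:ℝ) 1, G t ≤ 0 := by
    intro t ht
    have := hanti h0 ht ht.1
    simp only [hG0, zero_div] at this
    by_contra hcon
    push Not at hcon
    have := div_pos hcon (hFpos t)
    linarith
  have hanti2 : AntitoneOn F (Set.Ico (0:ℝ) 1) := by
    apply antitoneOn_of_deriv_nonpos (convex_Ico 0 1)
    · exact fun t ht => (hF1 t ht).continuousAt.continuousWithinAt
    · exact fun t ht => (hF1 t (hint ht)).differentiableAt.differentiableWithinAt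
    · intro t ht
      rw [(hF1 t (hint ht)).deriv]
      exact hGneg t (hint ht)
  have := hanti2 h0 ⟨ht0, ht1⟩ ht0
  rw [hF0] at this
  exact this

lemma pointD {n : ℕ} (ν : (Fin n → Bool) → ℝ)
    (hν0 : ∀ σ, 0 ≤ ν σ) (hν1 : ∑ σ : Fin n → Bool, ν σ = 1)
    (β : ℝ) (hβ : 1 ≤ β)
    (hcond : ∀ x : Fin n → ℝ, ∀ u : Fin n → ℝ,
      (∑ i, ∑ j, u i * hess (LL ν) x i j * u j) ≤ β * ∑ i, hess (LL ν) x i i * (u i) ^ 2)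
    (σ : Fin n → Bool) (hσ : 0 < ν σ) (q : Fin n → ℝ)
    (hq : ∀ i, q i = ∑ τ : Fin n → Bool, if τ i = σ i then ν τ else 0) :
    β * Real.log (ν σ) ≤ ∑ i, Real.log (q i) := by
  have hβ0 : 0 < β := by linarith
  have hqpos : ∀ i, 0 < q i := by
    intro i
    rw [hq]
    exact Finset.sum_pos' (fun τ _ => by split_ifs <;> simp [hν0]) ⟨σ, mem_univ _, by simpa using hσ⟩
  set d : Fin n → Bool → ℝ := fun i b => if b = σ i then (q i)⁻¹ - 1 else -1 with hdd
  have hd : ∀ i b, -1 ≤ d i b := by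
    intro i b
    simp only [hdd]
    split_ifs
    · have := inv_pos.2 (hqpos i); linarith
    · exact le_rfl
  have hd0 : ∑ τ, ν τ * ∑ i, d i (τ i) = 0 := by
    simp_rw [Finset.mul_sum]
    rw [Finset.sum_comm]
    refine Finset.sum_eq_zero fun i _ => ?_
    have : ∀ τ : Fin n → Bool, ν τ * d i (τ i)
        = (if τ i = σ i then ν τ else 0) * (q i)⁻¹ - ν τ := by
      intro τ
      simp only [hdd]
      split_ifs <;> ring
    simp_rw [this]
    rw [Finset.sum_sub_distrib, ← Finset.sum_mul, ← hq, hν1, mul_inv_cancel₀ (hqpos i).ne', sub_self]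
  have hb : ∀ t ∈ Set.Ico (0:ℝ) 1,
      Real.log (ν σ) + ∑ i, β⁻¹ * Real.log (1 + t * ((q i)⁻¹ - 1)) ≤ 0 := by
    intro t ht
    have h := expC ν hν0 hν1 β hβ hcond d hd hd0 t ht.1 ht.2
    have h1 := (Finset.single_le_sum (f := fun τ : Fin n → Bool =>
      ν τ * Real.exp (∑ i, β⁻¹ * Real.log (1 + t * d i (τ i))))
      (fun τ _ => mul_nonneg (hν0 τ) (Real.exp_pos _).le) (mem_univ σ)).trans h
    have h2 := Real.log_nonpos (mul_nonneg hσ.le (Real.exp_pos _).le) h1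
    rw [Real.log_mul hσ.ne' (Real.exp_pos _).ne', Real.log_exp] at h2
    simpa [hdd] using h2
  have hlim : Filter.Tendsto (fun t : ℝ =>
      Real.log (ν σ) + ∑ i, β⁻¹ * Real.log (1 + t * ((q i)⁻¹ - 1))) (nhdsWithin 1 (Set.Iio 1))
      (nhds (Real.log (ν σ) + ∑ i, β⁻¹ * Real.log (1 + 1 * ((q i)⁻¹ - 1)))) := by
    have : ContinuousAt (fun t : ℝ =>
      Real.log (ν σ) + ∑ i, β⁻¹ * Real.log (1 + t * ((q i)⁻¹ - 1))) 1 := by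
      refine continuousAt_const.add (tendsto_finsetSum _ fun i _ => ?_)
      refine Filter.Tendsto.const_mul _ ?_
      refine ContinuousAt.log (by fun_prop) ?_
      have := inv_pos.2 (hqpos i)
      simp; exact (hqpos i).ne'
    exact this.tendsto.mono_left nhdsWithin_le_nhds
  have hfin := le_of_tendsto hlim (by
    filter_upwards [Ico_mem_nhdsLT (zero_lt_one' ℝ)] with t ht using hb t ht)
  rw [← Finset.mul_sum] at hfin
  simp at hfin
  have h3 := mul_le_mul_of_nonneg_left hfin hβ0.le
  have h4 : β * (β⁻¹ * ∑ i, Real.log (q i)) = ∑ i, Real.log (q i) := by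
    rw [← mul_assoc, mul_inv_cancel₀ hβ0.ne', one_mul]
  linarith



/-- If `∇²L[ν](x) ⪯ β · diag(∇²L[ν](x))` for all `x` and some `β ≥ 1`, then the sum of the
marginal entropies is at most `β` times the entropy of `ν`: `∑ᵢ H(πᵢ(ν)) ≤ β · H(ν)`. -/
theorem stmt19 {n : ℕ} (ν : (Fin n → Bool) → ℝ)
    (hν0 : ∀ σ, 0 ≤ ν σ) (hν1 : ∑ σ : Fin n → Bool, ν σ = 1)
    (β : ℝ) (hβ : 1 ≤ β)
    (hcond : ∀ x : Fin n → ℝ, ∀ u : Fin n → ℝ,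
      (∑ i, ∑ j, u i * hess (LL ν) x i j * u j) ≤ β * ∑ i, hess (LL ν) x i i * (u i) ^ 2)
    (p : Fin n → ℝ) (hp : ∀ i, p i = ∑ σ : Fin n → Bool, if σ i then ν σ else 0) :
    (∑ i, (-(p i * Real.log (p i)) - (1 - p i) * Real.log (1 - p i)))
      ≤ β * ∑ σ : Fin n → Bool, -(ν σ * Real.log (ν σ)) := by

  set q : (Fin n → Bool) → Fin n → ℝ := fun σ i => if σ i then p i else 1 - p i with hqd
  have hq : ∀ σ i, q σ i = ∑ τ : Fin n → Bool, if τ i = σ i then ν τ else 0 := by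
    intro σ i
    simp only [hqd]
    cases h : σ i
    · simp only [Bool.false_eq_true, if_false]
      rw [hp, ← hν1, ← Finset.sum_sub_distrib]
      refine Finset.sum_congr rfl fun τ _ => ?_
      cases τ i <;> simp
    · simp [hp]
  have h1 : ∀ σ, β * (ν σ * Real.log (ν σ)) ≤ ∑ i, ν σ * Real.log (q σ i) := by
    intro σ
    rw [← Finset.mul_sum]
    rcases (hν0 σ).eq_or_lt with h | h
    · simp [← h]
    · have := mul_le_mul_of_nonneg_left
        (pointD ν hν0 hν1 β hβ hcond σ h (q σ) (hq σ)) h.le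
      linarith
  have h2 := Finset.sum_le_sum fun σ (_ : σ ∈ (univ : Finset (Fin n → Bool))) => h1 σ
  rw [Finset.sum_comm, ← Finset.mul_sum] at h2
  have h3 : ∀ i, ∑ σ, ν σ * Real.log (q σ i)
      = p i * Real.log (p i) + (1 - p i) * Real.log (1 - p i) := by
    intro i
    have e : 1 - p i = ∑ σ : Fin n → Bool, if σ i then 0 else ν σ := by
      rw [hp, ← hν1, ← Finset.sum_sub_distrib]
      refine Finset.sum_congr rfl fun τ _ => ?_
      cases τ i <;> simp
    have : ∀ σ : Fin n → Bool, ν σ * Real.log (q σ i)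
      = (if σ i then ν σ else 0) * Real.log (p i)
        + (if σ i then 0 else ν σ) * Real.log (1 - p i) := by
      intro σ
      simp only [hqd]
      cases σ i <;> simp
    simp_rw [this]
    rw [Finset.sum_add_distrib, ← Finset.sum_mul, ← Finset.sum_mul, ← hp, ← e]
  simp_rw [h3] at h2
  rw [Finset.sum_neg_distrib]
  have h4 : (∑ i, (-(p i * Real.log (p i)) - (1 - p i) * Real.log (1 - p i)))
    = - ∑ i, (p i * Real.log (p i) + (1 - p i) * Real.log (1 - p i)) := by
    rw [← Finset.sum_neg_distrib]
    exact Finset.sum_congr rfl fun i _ => by ring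
  rw [h4]
  linarith
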